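/- arXiv:2002.08824 — 2 statements merged into one kernel-verified Lean document; each statement's English description precedes it below -/
import Mathlib

section
/- Let C be an [n,k] linear code over F_q, 1 ≤ i ≤ k, and let D ⊆ C be a bottom-up greedy i-subcode. Then Supp(D) ∈ N_i, i.e. Supp(D) is an inclusion-minimal subset of E of nullity i in the matroid M_C. -/
open Finset
open scoped Classical

noncomputable section

/-- The rank in the matroid `M_C`: `r(X)` is the rank of the column submatrix `H_X`. -/
def colRank {F : Type*} [Field F] {m n : ℕ} (H : Matrix (Fin m) (Fin n) F)
    (X : Finset (Fin n)) : ℕ :=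
  Module.finrank F (Submodule.span F ((fun j i => H i j) '' (X : Set (Fin n))))

/-- The nullity function of the matroid `M_C`: `n(X) = |X| - r(X)`. -/
def nulC {F : Type*} [Field F] {m n : ℕ} (H : Matrix (Fin m) (Fin n) F)
    (X : Finset (Fin n)) : ℕ :=
  X.card - colRank H X

/-- The support of a word. -/
def supp {F : Type*} [Field F] {n : ℕ} (c : Fin n → F) : Finset (Fin n) :=
  Finset.univ.filter (fun i => c i ≠ 0)

/-- The support of a subcode. -/
def suppD {F : Type*} [Field F] {n : ℕ} (D : Submodule F (Fin n → F)) : Finset (Fin n) :=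
  Finset.univ.filter (fun i => ∃ c ∈ D, c i ≠ 0)

/-- The weight of a subcode: the cardinality of its support. -/
def wt {F : Type*} [Field F] {n : ℕ} (D : Submodule F (Fin n → F)) : ℕ := (suppD D).card

/-- The subcode `C(X) = {c ∈ C : Supp(c) ⊆ X}`. -/
def codeRestrict {F : Type*} [Field F] {n : ℕ} (C : Submodule F (Fin n → F))
    (X : Finset (Fin n)) : Submodule F (Fin n → F) where
  carrier := {c | c ∈ C ∧ ∀ i ∉ X, c i = 0}
  add_mem' := by
    rintro a b ⟨ha, ha0⟩ ⟨hb, hb0⟩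
    exact ⟨C.add_mem ha hb, fun i hi => by simp [Pi.add_apply, ha0 i hi, hb0 i hi]⟩
  zero_mem' := ⟨C.zero_mem, fun i _ => rfl⟩
  smul_mem' := by
    rintro r a ⟨ha, ha0⟩
    exact ⟨C.smul_mem r ha, fun i hi => by simp [Pi.smul_apply, ha0 i hi]⟩

/-- The code defined by the parity check matrix `H`: `C = {x : H x = 0}`. -/
def codeOf {F : Type*} [Field F] {m n : ℕ} (H : Matrix (Fin m) (Fin n) F) :
    Submodule F (Fin n → F) :=
  LinearMap.ker H.mulVecLin

/-- The `r`-th generalized Hamming weight of a code `C`. -/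
def dC {F : Type*} [Field F] {n : ℕ} (C : Submodule F (Fin n → F)) (r : ℕ) : ℕ :=
  sInf {w | ∃ D : Submodule F (Fin n → F), D ≤ C ∧ Module.finrank F D = r ∧ wt D = w}

/-- `D` computes `d_r(C)`: `D ⊆ C`, `dim D = r` and `wt(D) = d_r(C)`. -/
def Computes {F : Type*} [Field F] {n : ℕ} (C : Submodule F (Fin n → F)) (r : ℕ)
    (D : Submodule F (Fin n → F)) : Prop :=
  D ≤ C ∧ Module.finrank F D = r ∧ wt D = dC C r

end
noncomputable section

/-- `BUG C i` is the set of bottom-up greedy `i`-subcodes of `C`: a bottom-up greedy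
`1`-subcode is a `1`-dimensional subcode of minimal weight, and a bottom-up greedy `r`-subcode
(`r ≥ 2`) is an `r`-dimensional subcode containing some bottom-up greedy `(r-1)`-subcode, of
minimal weight among all such. -/
def BUG {F : Type*} [Field F] {n : ℕ} (C : Submodule F (Fin n → F)) :
    ℕ → Set (Submodule F (Fin n → F))
  | 0 => {⊥}
  | 1 => {D | D ≤ C ∧ Module.finrank F D = 1 ∧
      ∀ D₂ ≤ C, Module.finrank F D₂ = 1 → wt D ≤ wt D₂}
  | (r+2) => {D | D ≤ C ∧ Module.finrank F D = r + 2 ∧ (∃ D' ∈ BUG C (r+1), D' ≤ D) ∧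
      ∀ D₂ ≤ C, Module.finrank F D₂ = r + 2 →
        (∃ D₂' ∈ BUG C (r+1), D₂' ≤ D₂) → wt D ≤ wt D₂}

lemma nulC_eq_aux {F : Type*} [Field F] {m n : ℕ} (H : Matrix (Fin m) (Fin n) F)
    (X : Finset (Fin n)) :
    nulC H X = Module.finrank F (codeRestrict (codeOf H) X) := by
  let e : (X → F) →ₗ[F] (Fin n → F) :=
    Function.ExtendByZero.linearMap F (Subtype.val : X → Fin n)
  have hein : ∀ (v : X → F) (j : X), e v j = v j := by
    intro v j
    exact Subtype.val_injective.extend_apply v 0 j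
  have heout : ∀ (v : X → F) (j : Fin n), j ∉ X → e v j = 0 := by
    intro v j hj
    refine Function.extend_apply' v (0 : Fin n → F) j ?_
    rintro ⟨a, rfl⟩
    exact hj a.2
  have he : Function.Injective e := by
    intro v w hvw
    funext j
    rw [← hein v j, ← hein w j, hvw]
  let g : (X → F) →ₗ[F] (Fin m → F) := H.mulVecLin ∘ₗ e
  have hg : ∀ v, g v = Fintype.linearCombination F (fun (j : X) (i : Fin m) => H i j) v := by
    intro v
    funext i
    simp only [g, LinearMap.comp_apply, Matrix.mulVecLin_apply, Matrix.mulVec, dotProduct,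
      Fintype.linearCombination_apply, Finset.sum_apply, Pi.smul_apply, smul_eq_mul]
    rw [← Finset.sum_subset (Finset.subset_univ X)
      (fun j _ hj => by rw [heout v j hj, mul_zero]), ← Finset.sum_coe_sort X]
    refine Finset.sum_congr rfl fun j _ => ?_
    rw [hein, mul_comm]
  have hg' : g = Fintype.linearCombination F (fun (j : X) (i : Fin m) => H i j) :=
    LinearMap.ext hg
  have hrange : Module.finrank F (LinearMap.range g) = colRank H X := by
    rw [hg', Fintype.range_linearCombination, colRank, Set.image_eq_range]
    rfl
  have hker : (LinearMap.ker g).map e = codeRestrict (codeOf H) X := by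
    ext c
    constructor
    · rintro ⟨v, hv, rfl⟩
      exact ⟨hv, heout v⟩
    · rintro ⟨hc, hc0⟩
      have hev : e (fun j => c j) = c := by
        funext j
        by_cases hj : j ∈ X
        · exact hein _ ⟨j, hj⟩
        · rw [heout _ j hj, hc0 j hj]
      refine ⟨fun j => c j, ?_, hev⟩
      change H.mulVecLin (e _) = 0
      rw [hev]
      exact hc
  have h1 := LinearMap.finrank_range_add_finrank_ker g
  rw [Module.finrank_fintype_fun_eq_card, Fintype.card_coe, hrange] at h1
  rw [← hker, (Submodule.equivMapOfInjective e he (LinearMap.ker g)).finrank_eq.symm, nulC]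
  omega

lemma le_restrict_aux {F : Type*} [Field F] {n : ℕ} {C D : Submodule F (Fin n → F)}
    {X : Finset (Fin n)} : D ≤ codeRestrict C X ↔ D ≤ C ∧ suppD D ⊆ X := by
  constructor
  · intro h
    refine ⟨fun c hc => (h hc).1, fun j hj => ?_⟩
    obtain ⟨c, hc, hcj⟩ := (Finset.mem_filter.1 hj).2
    by_contra hjX
    exact hcj ((h hc).2 j hjX)
  · rintro ⟨h, hX⟩ c hc
    refine ⟨h hc, fun j hj => ?_⟩
    by_contra hcj
    exact hj (hX (Finset.mem_filter.2 ⟨Finset.mem_univ _, c, hc, hcj⟩))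

lemma erase_aux {F : Type*} [Field F] {n : ℕ} (C : Submodule F (Fin n → F))
    (X : Finset (Fin n)) (x : Fin n) :
    Module.finrank F (codeRestrict C X) ≤ Module.finrank F (codeRestrict C (X.erase x)) + 1 := by
  let φ : codeRestrict C X →ₗ[F] F := (LinearMap.proj x).comp (codeRestrict C X).subtype
  have h1 := LinearMap.finrank_range_add_finrank_ker φ
  have h2 : Module.finrank F (LinearMap.range φ) ≤ 1 := by
    simpa using Submodule.finrank_le (LinearMap.range φ)
  have h3 : (LinearMap.ker φ).map (codeRestrict C X).subtype ≤ codeRestrict C (X.erase x) := by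
    rintro _ ⟨⟨c, hc⟩, hv, rfl⟩
    refine ⟨hc.1, fun j hj => ?_⟩
    by_cases hjx : j = x
    · subst hjx
      exact hv
    · exact hc.2 j fun h => hj (Finset.mem_erase.2 ⟨hjx, h⟩)
  have h4 := Submodule.finrank_mono h3
  rw [Submodule.finrank_map_subtype_eq] at h4
  omega

lemma step_aux {F : Type*} [Field F] {n r : ℕ} {C D D' : Submodule F (Fin n → F)}
    (hDC : D ≤ C) (hD : Module.finrank F D = r + 1) (hD'D : D' ≤ D)
    (hD' : Module.finrank F D' = r) (hres : codeRestrict C (suppD D') = D')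
    (hmin : ∀ D₂ ≤ C, Module.finrank F D₂ = r + 1 → D' ≤ D₂ → wt D ≤ wt D₂) :
    codeRestrict C (suppD D) = D := by
  have hle : D ≤ codeRestrict C (suppD D) := le_restrict_aux.2 ⟨hDC, Finset.Subset.refl _⟩
  symm
  refine Submodule.eq_of_le_of_finrank_le hle ?_
  by_contra hlt
  have hns : ¬ suppD D ⊆ suppD D' := by
    intro h
    have h1 : D ≤ codeRestrict C (suppD D') := le_restrict_aux.2 ⟨hDC, h⟩
    rw [hres] at h1
    have := Submodule.finrank_mono h1
    omega
  obtain ⟨x, hx, hx'⟩ := Finset.not_subset.1 hns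
  have her := erase_aux C (suppD D) x
  have hsub : D' ≤ codeRestrict C ((suppD D).erase x) := by
    refine le_restrict_aux.2 ⟨hD'D.trans hDC, fun j hj => Finset.mem_erase.2 ⟨?_, ?_⟩⟩
    · rintro rfl
      exact hx' hj
    · exact (le_restrict_aux.1 (hD'D.trans hle)).2 hj
  have hnle : ¬ codeRestrict C ((suppD D).erase x) ≤ D' := by
    intro h
    have := Submodule.finrank_mono h
    omega
  obtain ⟨v, hv, hv'⟩ := SetLike.not_le_iff_exists.1 hnle
  have hfr : Module.finrank F (D' ⊔ Submodule.span F {v} : Submodule F (Fin n → F)) = r + 1 := by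
    have hv0 : v ≠ 0 := by
      rintro rfl
      exact hv' D'.zero_mem
    have hup := Submodule.finrank_add_le_finrank_add_finrank D' (Submodule.span F {v})
    rw [finrank_span_singleton hv0] at hup
    have hlt : D' < D' ⊔ Submodule.span F {v} := by
      refine lt_of_le_of_ne le_sup_left fun h => hv' ?_
      rw [h]
      exact Submodule.mem_sup_right (Submodule.mem_span_singleton_self v)
    have := Submodule.finrank_lt_finrank_of_lt hlt
    omega
  have hle2 : D' ⊔ Submodule.span F {v} ≤ codeRestrict C ((suppD D).erase x) :=
    sup_le hsub ((Submodule.span_singleton_le_iff_mem _ _).2 hv)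
  have h5 := le_restrict_aux.1 hle2
  have h6 := hmin _ h5.1 hfr le_sup_left
  have h7 := Finset.card_le_card h5.2
  have h8 := Finset.card_erase_lt_of_mem hx
  unfold wt at h6
  omega

lemma bug_aux {F : Type*} [Field F] {n : ℕ} (C : Submodule F (Fin n → F)) (r : ℕ) :
    ∀ D ∈ BUG C (r + 1), D ≤ C ∧ Module.finrank F D = r + 1 ∧
      codeRestrict C (suppD D) = D := by
  induction r with
  | zero =>
    rintro D ⟨hDC, hD, hmin⟩
    refine ⟨hDC, hD, ?_⟩
    refine step_aux (r := 0) (D' := ⊥) hDC hD bot_le (finrank_bot F _) ?_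
      (fun D₂ h h' _ => hmin D₂ h h')
    refine (Submodule.eq_bot_iff _).2 fun c hc => funext fun j => hc.2 j ?_
    simp [suppD]
  | succ r ih =>
    rintro D ⟨hDC, hD, ⟨D', hB, hD'D⟩, hmin⟩
    obtain ⟨-, h2, h3⟩ := ih D' hB
    exact ⟨hDC, hD, step_aux hDC hD hD'D h2 h3 (fun D₂ h h' h'' => hmin D₂ h h' ⟨D', hB, h''⟩)⟩

/-- if `D` is a bottom-up greedy `i`-subcode of an `[n,k]` code `C`
(`1 ≤ i ≤ k`), then `Supp(D) ∈ N_i`: `Supp(D)` is inclusion-minimal among the subsets of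
nullity `i` in the matroid `M_C`. -/
theorem statement11 {F : Type*} [Field F] [Fintype F] {m k n : ℕ} (hmk : m + k = n)
    (H : Matrix (Fin m) (Fin n) F) (hH : H.rank = m)
    (i : ℕ) (hi1 : 1 ≤ i) (hik : i ≤ k)
    (D : Submodule F (Fin n → F)) (hD : D ∈ BUG (codeOf H) i) :
    nulC H (suppD D) = i ∧ ∀ Y ⊆ suppD D, nulC H Y = i → Y = suppD D := by
  obtain ⟨r, rfl⟩ : ∃ r, i = r + 1 := ⟨i - 1, by omega⟩
  obtain ⟨hDC, hfr, hres⟩ := bug_aux _ r D hD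
  refine ⟨by rw [nulC_eq_aux, hres, hfr], fun Y hY hnY => ?_⟩
  rw [nulC_eq_aux] at hnY
  refine Finset.Subset.antisymm hY ?_
  have hle : codeRestrict (codeOf H) Y ≤ D := by
    conv_rhs => rw [← hres]
    intro c hc
    exact ⟨hc.1, fun j hj => hc.2 j fun h => hj (hY h)⟩
  have heq := Submodule.eq_of_le_of_finrank_eq hle (hnY.trans hfr.symm)
  exact (le_restrict_aux.1 heq.ge).2

end
end

section
/- Let C be an [n,k] linear code over F_q. Then for every 1 ≤ i ≤ k, the i-th top-down greedy weight of C equals the i-th top-down greedy weight of its matroid M_C: ẽ_i(C) = ẽ_i(M_C). -/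
open Finset
open scoped Classical

noncomputable section

/-- `TDG C k j` is the set of top-down greedy `(k-j)`-subcodes of an `[n,k]` code `C`:
`TDG C k 0 = {C}`, and a top-down greedy `r`-subcode (`r = k-(j+1)`) is an `r`-dimensional
subcode contained in some top-down greedy `(r+1)`-subcode, of minimal weight among all such. -/
def TDG {F : Type*} [Field F] {n : ℕ} (C : Submodule F (Fin n → F)) (k : ℕ) :
    ℕ → Set (Submodule F (Fin n → F))
  | 0 => {C}
  | (j+1) => {D | (∃ D' ∈ TDG C k j, D ≤ D') ∧ Module.finrank F D = k - (j+1) ∧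
      ∀ D₂ : Submodule F (Fin n → F), (∃ D₂' ∈ TDG C k j, D₂ ≤ D₂') →
        Module.finrank F D₂ = k - (j+1) → wt D ≤ wt D₂}

/-- `w` is the lexicographically smallest element of `A`. -/
def IsLexMin {k : ℕ} (A : Set (Fin k → ℕ)) (w : Fin k → ℕ) : Prop :=
  w ∈ A ∧ ∀ u ∈ A, toLex w ≤ toLex u

/-- `w` is the reverse-lexicographically smallest element of `A`. -/
def IsRevLexMin {k : ℕ} (A : Set (Fin k → ℕ)) (w : Fin k → ℕ) : Prop :=
  w ∈ A ∧ ∀ u ∈ A, toLex (w ∘ Fin.rev) ≤ toLex (u ∘ Fin.rev)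

/-- The set `{e(S) : S ∈ Σ}` of cardinality-tuples of chains `σ_1 ⊊ ⋯ ⊊ σ_k` with
`σ_i ∈ 𝒩_i` for the matroid `M_C` of the code with parity check matrix `H`. -/
def eSetC {F : Type*} [Field F] {m n : ℕ} (H : Matrix (Fin m) (Fin n) F) (k : ℕ) :
    Set (Fin k → ℕ) :=
  {u | ∃ σ : Fin k → Finset (Fin n),
    (StrictMono σ ∧ ∀ i : Fin k, nulC H (σ i) = (i : ℕ) + 1) ∧ ∀ i, (σ i).card = u i}

theorem aux_finrank_map {F V W : Type*} [Field F] [AddCommGroup V] [Module F V]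
    [AddCommGroup W] [Module F W] (e : V →ₗ[F] W) (he : Function.Injective e)
    (p : Submodule F V) : Module.finrank F (p.map e) = Module.finrank F p :=
  (LinearEquiv.finrank_eq (Submodule.equivMapOfInjective e he p)).symm

theorem aux_mem_restrict {F : Type*} [Field F] {n : ℕ} (C : Submodule F (Fin n → F))
    (X : Finset (Fin n)) (c : Fin n → F) :
    c ∈ codeRestrict C X ↔ c ∈ C ∧ ∀ i ∉ X, c i = 0 := Iff.rfl

theorem aux_mem_suppD {F : Type*} [Field F] {n : ℕ} (D : Submodule F (Fin n → F)) (i : Fin n) :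
    i ∈ suppD D ↔ ∃ c ∈ D, c i ≠ 0 := by simp [suppD]

theorem aux_suppD_mono {F : Type*} [Field F] {n : ℕ} {D D' : Submodule F (Fin n → F)}
    (h : D ≤ D') : suppD D ⊆ suppD D' := by
  intro i hi
  rw [aux_mem_suppD] at *
  obtain ⟨c, hc, h0⟩ := hi
  exact ⟨c, h hc, h0⟩

theorem aux_suppD_restrict {F : Type*} [Field F] {n : ℕ} (C : Submodule F (Fin n → F))
    (X : Finset (Fin n)) : suppD (codeRestrict C X) ⊆ X := by
  intro i hi
  rw [aux_mem_suppD] at hi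
  obtain ⟨c, hc, h0⟩ := hi
  by_contra h
  exact h0 (hc.2 i h)

theorem aux_restrict_mono {F : Type*} [Field F] {n : ℕ} (C : Submodule F (Fin n → F))
    {X Y : Finset (Fin n)} (h : X ⊆ Y) : codeRestrict C X ≤ codeRestrict C Y :=
  fun _ hc => ⟨hc.1, fun i hi => hc.2 i (fun h' => hi (h h'))⟩

theorem aux_le_restrict {F : Type*} [Field F] {n : ℕ} {C D : Submodule F (Fin n → F)}
    (h : D ≤ C) : D ≤ codeRestrict C (suppD D) := by
  intro c hc
  refine ⟨h hc, fun i hi => ?_⟩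
  by_contra h0
  exact hi ((aux_mem_suppD D i).2 ⟨c, hc, h0⟩)

theorem aux_nul {F : Type*} [Field F] {m n : ℕ} (H : Matrix (Fin m) (Fin n) F)
    (X : Finset (Fin n)) :
    Module.finrank F (codeRestrict (codeOf H) X) = nulC H X := by
  let L : (X → F) →ₗ[F] (Fin m → F) := Fintype.linearCombination F (fun j : X => fun i => H i j)
  let e : (X → F) →ₗ[F] (Fin n → F) := Function.ExtendByZero.linearMap F (Subtype.val : X → Fin n)
  have he : Function.Injective e := by
    intro a b hab
    funext j
    have := congrFun hab j.1
    simpa [e, Subtype.val_injective.extend_apply] using this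
  have he1 : ∀ (x : X → F) (j : X), e x j.1 = x j := by
    intro x j
    simp [e, Subtype.val_injective.extend_apply]
  have he0 : ∀ (x : X → F) (j : Fin n), j ∉ X → e x j = 0 := by
    intro x j hj
    simp only [e, Function.ExtendByZero.linearMap_apply]
    rw [Function.extend_apply']
    · rfl
    · rintro ⟨a, rfl⟩
      exact hj a.2
  have hL : ∀ x, L x = H.mulVecLin (e x) := by
    intro x
    funext i
    simp only [L, Fintype.linearCombination_apply, Matrix.mulVecLin_apply, Matrix.mulVec, dotProduct,
      Finset.sum_apply, Pi.smul_apply, smul_eq_mul]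
    rw [← Finset.sum_subset (Finset.subset_univ X)]
    · rw [← Finset.sum_coe_sort X]
      refine Finset.sum_congr rfl fun j _ => ?_
      rw [he1, mul_comm]
    · intro j _ hj
      rw [he0 x j hj, mul_zero]
  have hmap : codeRestrict (codeOf H) X = (LinearMap.ker L).map e := by
    ext c
    simp only [aux_mem_restrict, Submodule.mem_map, LinearMap.mem_ker, codeOf]
    constructor
    · rintro ⟨h1, h2⟩
      have hc : e (fun j => c j.1) = c := by
        funext j
        by_cases hj : j ∈ X
        · exact he1 _ ⟨j, hj⟩
        · rw [he0 _ j hj, h2 j hj]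
      exact ⟨fun j => c j.1, by rw [hL, hc, h1], hc⟩
    · rintro ⟨x, hx, rfl⟩
      exact ⟨by rw [← hL, hx], he0 x⟩
  have hr : LinearMap.range L = Submodule.span F ((fun j i => H i j) '' (X : Set (Fin n))) := by
    simp only [L, Fintype.range_linearCombination]
    congr 1
    ext y
    simp
  have h1 := LinearMap.finrank_range_add_finrank_ker L
  rw [hmap, aux_finrank_map e he, nulC, colRank, ← hr]
  simp at h1
  omega

theorem aux_cut {F : Type*} [Field F] {n : ℕ} (D : Submodule F (Fin n → F)) (p : Fin n)
    (hp : p ∈ suppD D) : ∃ D₂ ≤ D, Module.finrank F D₂ + 1 = Module.finrank F D ∧ wt D₂ < wt D := by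
  let f : Module.Dual F D := (LinearMap.proj p : (Fin n → F) →ₗ[F] F).comp D.subtype
  have hf : f ≠ 0 := by
    obtain ⟨c, hc, h0⟩ := (aux_mem_suppD D p).1 hp
    intro h
    exact h0 (LinearMap.congr_fun h ⟨c, hc⟩)
  have h1 := Module.Dual.finrank_ker_add_one_of_ne_zero hf
  have hle : (LinearMap.ker f).map D.subtype ≤ D := Submodule.map_subtype_le _ _
  refine ⟨(LinearMap.ker f).map D.subtype, hle, ?_, ?_⟩
  · rw [aux_finrank_map _ D.injective_subtype, h1]
  · apply Finset.card_lt_card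
    refine (Finset.ssubset_iff_of_subset (aux_suppD_mono hle)).2 ⟨p, hp, ?_⟩
    rw [aux_mem_suppD]
    rintro ⟨c, hc, h0⟩
    obtain ⟨x, hx, rfl⟩ := hc
    exact h0 hx

theorem aux_supp_nonempty {F : Type*} [Field F] {n : ℕ} (D : Submodule F (Fin n → F))
    (h : 0 < Module.finrank F D) : ∃ p, p ∈ suppD D := by
  have : D ≠ ⊥ := by
    rintro rfl
    simp at h
  obtain ⟨c, hc, h0⟩ := D.ne_bot_iff.1 this
  obtain ⟨p, hp⟩ := Function.ne_iff.1 h0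
  exact ⟨p, (aux_mem_suppD D p).2 ⟨c, hc, hp⟩⟩

theorem aux_TDG_basic {F : Type*} [Field F] {n k : ℕ} (C : Submodule F (Fin n → F))
    (hC : Module.finrank F C = k) (j : ℕ) :
    ∀ D ∈ TDG C k j, D ≤ C ∧ Module.finrank F D = k - j := by
  induction j with
  | zero => rintro D rfl; exact ⟨le_rfl, by simpa using hC⟩
  | succ j ih =>
    rintro D ⟨⟨D', h1, h2⟩, h3, -⟩
    exact ⟨h2.trans (ih D' h1).1, h3⟩

theorem aux_TDG_wt {F : Type*} [Field F] {n k : ℕ} (C : Submodule F (Fin n → F)) (j : ℕ)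
    (D D' : Submodule F (Fin n → F)) (h : D ∈ TDG C k j) (h' : D' ∈ TDG C k j) :
    wt D = wt D' := by
  cases j with
  | zero => rw [show D = C from h, show D' = C from h']
  | succ j => exact le_antisymm (h.2.2 D' h'.1 h'.2.1) (h'.2.2 D h.1 h.2.1)

theorem aux_TDG_nonempty {F : Type*} [Field F] {n k : ℕ} (C : Submodule F (Fin n → F))
    (hC : Module.finrank F C = k) (j : ℕ) (hj : j ≤ k) : (TDG C k j).Nonempty := by
  induction j with
  | zero => exact ⟨C, rfl⟩
  | succ j ih =>
    obtain ⟨D', hD'⟩ := ih (by omega)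
    have hd := (aux_TDG_basic C hC j D' hD').2
    obtain ⟨p, hp⟩ := aux_supp_nonempty D' (by omega)
    obtain ⟨D₂, h1, h2, -⟩ := aux_cut D' p hp
    let S : Set (Submodule F (Fin n → F)) :=
      {D | (∃ D' ∈ TDG C k j, D ≤ D') ∧ Module.finrank F D = k - (j+1)}
    have hS : S.Nonempty := ⟨D₂, ⟨D', hD', h1⟩, by omega⟩
    have hm : Function.argminOn wt S hS ∈ S := Function.argminOn_mem wt S hS
    exact ⟨Function.argminOn wt S hS, hm.1, hm.2, fun D h h' => Function.argminOn_le wt S ⟨h, h'⟩⟩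

theorem aux_TDG_closed {F : Type*} [Field F] {n k : ℕ} (C : Submodule F (Fin n → F))
    (hC : Module.finrank F C = k) (j : ℕ) (hj : j ≤ k) :
    ∀ D ∈ TDG C k j, codeRestrict C (suppD D) = D := by
  induction j with
  | zero =>
    rintro D rfl
    exact le_antisymm (fun c hc => hc.1) (aux_le_restrict le_rfl)
  | succ j ih =>
    intro D hD
    obtain ⟨D', hD', hle⟩ := hD.1
    have hcl := ih (by omega) D' hD'
    have hd := (aux_TDG_basic C hC j D' hD').2
    obtain ⟨hDC, hd2⟩ := aux_TDG_basic C hC (j+1) D hD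
    obtain ⟨p, hp⟩ := aux_supp_nonempty D' (by omega)
    obtain ⟨D₂, h1, h2, h3⟩ := aux_cut D' p hp
    have h4 := hD.2.2 D₂ ⟨D', hD', h1⟩ (by omega)
    have h5 : codeRestrict C (suppD D) ≤ D' := by
      have := aux_restrict_mono C (aux_suppD_mono hle)
      rwa [hcl] at this
    have h6 : codeRestrict C (suppD D) < D' := by
      refine lt_of_le_of_ne h5 fun h => ?_
      have h7 := Finset.card_le_card (aux_suppD_restrict C (suppD D))
      rw [h] at h7
      simp only [wt] at *
      omega
    have h8 := Submodule.finrank_lt_finrank_of_lt h6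
    symm
    exact Submodule.eq_of_le_of_finrank_le (aux_le_restrict hDC) (by omega)

theorem aux_flag {F : Type*} [Field F] {n k : ℕ} (C : Submodule F (Fin n → F)) (j : ℕ) :
    ∀ D ∈ TDG C k j, ∃ f : ℕ → Submodule F (Fin n → F), Antitone f ∧
      (∀ l, j ≤ l → f l = D) ∧ ∀ l ≤ j, f l ∈ TDG C k l := by
  induction j with
  | zero =>
    intro D hD
    refine ⟨fun _ => D, fun _ _ _ => le_rfl, fun _ _ => rfl, fun l hl => ?_⟩
    obtain rfl : l = 0 := by omega
    exact hD
  | succ j ih =>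
    intro D hD
    obtain ⟨D', hD', hle⟩ := hD.1
    obtain ⟨f, hf, hf1, hf2⟩ := ih D' hD'
    refine ⟨fun l => if l ≤ j then f l else D, ?_, ?_, ?_⟩
    · intro a b hab
      by_cases hb : b ≤ j
      · simpa [hb, hab.trans hb] using hf hab
      · by_cases ha : a ≤ j
        · simp only [ha, hb, if_true, if_false]
          refine hle.trans ?_
          rw [← hf1 j le_rfl]
          exact hf ha
        · simp [ha, hb]
    · intro l hl
      simp [show ¬ l ≤ j by omega]
    · intro l hl
      by_cases h : l ≤ j
      · simpa [h] using hf2 l h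
      · obtain rfl : l = j + 1 := by omega
        simpa using hD

theorem aux_lex {k : ℕ} (a b : Fin k → ℕ) (h : toLex a ≤ toLex b) (i : Fin k)
    (hi : ∀ j < i, a j = b j) : a i ≤ b i := by
  rcases h.eq_or_lt with h | h
  · rw [toLex_inj.1 h]
  · obtain ⟨j, h1, h2⟩ := h
    rcases lt_trichotomy i j with h3 | rfl | h3
    · exact (h1 i h3).le
    · exact le_of_lt h2
    · exact absurd (hi j h3) (ne_of_lt h2)

theorem aux_finrank_code {F : Type*} [Field F] {m k n : ℕ} (hmk : m + k = n)
    (H : Matrix (Fin m) (Fin n) F) (hH : H.rank = m) : Module.finrank F (codeOf H) = k := by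
  have h1 := LinearMap.finrank_range_add_finrank_ker H.mulVecLin
  rw [Matrix.rank] at hH
  simp only [Module.finrank_fintype_fun_eq_card, Fintype.card_fin] at h1
  rw [codeOf]
  omega

/-- the top-down greedy weights of an `[n,k]` code `C` coincide with the
top-down greedy weights of its matroid `M_C`: if `v = (ẽ_1(M_C),…,ẽ_k(M_C))` is the
reverse-lexicographic minimum of `{e(S) : S ∈ Σ}` then the weight of any top-down greedy
`i`-subcode of `C` is `v i`. -/
theorem statement13 {F : Type*} [Field F] [Fintype F] {m k n : ℕ} (hmk : m + k = n)
    (H : Matrix (Fin m) (Fin n) F) (hH : H.rank = m)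
    (v : Fin k → ℕ) (hv : IsRevLexMin (eSetC H k) v) :
    ∀ i : Fin k, ∀ D ∈ TDG (codeOf H) k (k - ((i : ℕ) + 1)), wt D = v i := by
  set C := codeOf H with hCdef
  have hC : Module.finrank F C = k := aux_finrank_code hmk H hH
  obtain ⟨D₀, hD₀⟩ := aux_TDG_nonempty C hC k le_rfl
  obtain ⟨f, hf, -, hfT⟩ := aux_flag C k D₀ hD₀
  have hmem : (fun i : Fin k => wt (f (k - ((i : ℕ) + 1)))) ∈ eSetC H k := by
    refine ⟨fun i => suppD (f (k - ((i : ℕ) + 1))), ⟨?_, ?_⟩, fun i => rfl⟩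
    rotate_left
    · intro i
      rw [← aux_nul, ← hCdef, aux_TDG_closed C hC _ (Nat.sub_le _ _) _ (hfT _ (Nat.sub_le _ _)),
        (aux_TDG_basic C hC _ _ (hfT _ (Nat.sub_le _ _))).2]
      have := i.2
      omega
    · intro i j hij
      have hij' : (i : ℕ) < j := hij
      have hj := j.2
      refine lt_of_le_of_ne (aux_suppD_mono (hf (by omega))) fun h => ?_
      have h1 := aux_TDG_closed C hC _ (Nat.sub_le _ _) _ (hfT (k - ((i : ℕ) + 1)) (Nat.sub_le _ _))
      have h2 := aux_TDG_closed C hC _ (Nat.sub_le _ _) _ (hfT (k - ((j : ℕ) + 1)) (Nat.sub_le _ _))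
      have h3 := (aux_TDG_basic C hC _ _ (hfT (k - ((i : ℕ) + 1)) (Nat.sub_le _ _))).2
      have h4 := (aux_TDG_basic C hC _ _ (hfT (k - ((j : ℕ) + 1)) (Nat.sub_le _ _))).2
      simp only at h
      rw [h, h2] at h1
      rw [h1] at h4
      omega
  obtain ⟨⟨σ, ⟨hσ, hσn⟩, hσc⟩, hmin⟩ := hv
  have hlex := hmin _ hmem
  have key : ∀ l : ℕ, ∀ hl : l < k, codeRestrict C (σ (Fin.rev ⟨l, hl⟩)) ∈ TDG C k l ∧
      v (Fin.rev ⟨l, hl⟩) = wt (f l) := by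
    intro l
    induction l using Nat.strong_induction_on with
    | _ l ih =>
    intro hl
    have hup : v (Fin.rev ⟨l, hl⟩) ≤ wt (f l) := by
      have := aux_lex _ _ hlex ⟨l, hl⟩ (by
        intro j hj
        have h1 := (ih j hj j.2).2
        have h2 : k - (k - ((j : ℕ) + 1) + 1) = j := by have := j.2; omega
        simp only [Function.comp, Fin.val_rev, h2]
        exact h1)
      have h2 : k - (k - (l + 1) + 1) = l := by omega
      simpa only [Function.comp, Fin.val_rev, h2] using this
    have hdim : Module.finrank F (codeRestrict C (σ (Fin.rev ⟨l, hl⟩))) = k - l := by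
      rw [hCdef, aux_nul, hσn]
      simp only [Fin.val_rev]
      omega
    have hwt : wt (codeRestrict C (σ (Fin.rev ⟨l, hl⟩))) ≤ v (Fin.rev ⟨l, hl⟩) := by
      rw [← hσc]
      exact Finset.card_le_card (aux_suppD_restrict _ _)
    have hT : codeRestrict C (σ (Fin.rev ⟨l, hl⟩)) ∈ TDG C k l := by
      cases l with
      | zero =>
        exact Submodule.eq_of_le_of_finrank_eq (fun c hc => hc.1) (by rw [hdim, hC]; rfl)
      | succ l =>
        have h1 := (ih l (by omega) (by omega)).1
        refine ⟨⟨_, h1, aux_restrict_mono C (hσ.monotone ?_)⟩, hdim, fun D₂ h h' => ?_⟩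
        · rw [Fin.rev_le_rev]
          exact Nat.le_succ l
        · exact (hwt.trans hup).trans ((hfT (l+1) (by omega)).2.2 D₂ h h')
    refine ⟨hT, le_antisymm hup ?_⟩
    rw [aux_TDG_wt C l _ _ (hfT l (by omega)) hT]
    exact hwt
  intro i D hD
  have hi := i.2
  have h1 := (key (k - ((i : ℕ) + 1)) (by omega)).2
  rw [aux_TDG_wt C _ _ _ hD (hfT _ (Nat.sub_le _ _)), ← h1]
  congr 1
  ext
  simp only [Fin.val_rev]
  omega

end
end
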